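/- arXiv:1605.09569 — 3 statements merged into one kernel-verified Lean document; each statement's English description precedes it below -/
import Mathlib

section
/- Let j ≥ 1 be an integer. Suppose u : ℝ² → ℝ is continuous on the closed half-plane {(x₁,x₂) : x₁ ≥ 0}, harmonic on ℝ²_+ (i.e. twice continuously differentiable with vanishing Laplacian there), positively homogeneous of degree j (u(λx) = λ^j u(x) for all λ > 0 and all x with x₁ ≥ 0), and u(0, x₂) = 0 for all x₂ ∈ ℝ. Then there exists a constant c ∈ ℝ such that u(x) = c ψ_j(x) for every x with x₁ ≥ 0. -/
/-- `ψ_j(x₁,x₂) = Im(i^j (x₁ - i x₂)^j)`. -/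
noncomputable def psi (j : ℕ) (x : ℝ × ℝ) : ℝ :=
  (Complex.I ^ j * ((x.1 : ℂ) - Complex.I * (x.2 : ℂ)) ^ j).im

/-!
Identify `ℝ²` with `ℂ`. If `v` is harmonic then `g = ∂₁v - i ∂₂v` is holomorphic, and for `v`
homogeneous of degree `n ≠ 0` Euler's identity `x · ∇v = n v` says that `v` is the real part of the
holomorphic function `F(z) = z g(z) / n`. The Cauchy-Riemann equations give `F' = g`, so
`z F' = n F`, whence `F(z) = C z ^ n` and `v(z) = Re (C z ^ n)`. On the right half-plane this
extends by continuity to the boundary, where vanishing at `i` makes `C i ^ n` purely imaginary,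
leaving only the multiples of `ψ_n`.
-/

open Complex InnerProductSpace Set Topology
open scoped ComplexConjugate

theorem fderiv_apply_self_of_eventually_homogeneous {𝕜 E F : Type*} [NontriviallyNormedField 𝕜]
    [NormedAddCommGroup E] [NormedSpace 𝕜 E] [NormedAddCommGroup F] [NormedSpace 𝕜 F]
    {f : E → F} {x : E} {n : ℤ} (hf : DifferentiableAt 𝕜 f x)
    (hhom : ∀ᶠ l : 𝕜 in 𝓝 1, f (l • x) = l ^ n • f x) :
    fderiv 𝕜 f x x = (n : 𝕜) • f x := by
  have hray : HasDerivAt (fun l : 𝕜 => l • x) x 1 := by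
    simpa using (hasDerivAt_id (1 : 𝕜)).smul_const x
  have hleft : HasDerivAt (fun l : 𝕜 => f (l • x)) (fderiv 𝕜 f x x) 1 :=
    hf.hasFDerivAt.comp_hasDerivAt_of_eq 1 hray (one_smul 𝕜 x).symm
  have hright : HasDerivAt (fun l : 𝕜 => l ^ n • f x) ((n : 𝕜) • f x) 1 := by
    simpa using (hasDerivAt_zpow n (1 : 𝕜) (.inl one_ne_zero)).smul_const (f x)
  exact hleft.unique (hright.congr_of_eventuallyEq hhom)

theorem exists_eqOn_const_mul_zpow_of_mul_deriv_eq {𝕜 : Type*} [RCLike 𝕜] {U : Set 𝕜}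
    (hUo : IsOpen U) (hUc : IsPreconnected U) (hU0 : 0 ∉ U) {f : 𝕜 → 𝕜} {n : ℤ}
    (hf : DifferentiableOn 𝕜 f U) (hode : ∀ z ∈ U, z * deriv f z = n * f z) :
    ∃ C : 𝕜, EqOn f (fun z => C * z ^ n) U := by
  have hne : ∀ z ∈ U, z ≠ 0 := fun z hz h => hU0 (h ▸ hz)
  have hquot : ∀ z ∈ U, HasDerivAt (fun z => f z * z ^ (-n)) 0 z := fun z hz => by
    have hz0 := hne z hz
    have hfz := (hf.differentiableAt (hUo.mem_nhds hz)).hasDerivAt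
    refine (hfz.mul (hasDerivAt_zpow (-n) z (.inl hz0))).congr_deriv ?_
    rw [zpow_sub_one₀ hz0]
    push_cast
    field_simp
    linear_combination z ^ (-n) * hode z hz
  obtain ⟨C, hC⟩ := hUo.exists_is_const_of_deriv_eq_zero hUc
    (fun z hz => (hquot z hz).differentiableAt.differentiableWithinAt)
    fun z hz => (hquot z hz).deriv
  refine ⟨C, fun z hz => ?_⟩
  simp only [← hC z hz, zpow_neg, inv_mul_cancel_right₀ (zpow_ne_zero n (hne z hz))]

/-- The complex gradient `∂₁v - i ∂₂v = 2 ∂v/∂z` of a real function on the plane, the holomorphic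
function attached to a harmonic `v`. -/
noncomputable def complexGradient (v : ℂ → ℝ) (z : ℂ) : ℂ :=
  fderiv ℝ v z 1 - I * fderiv ℝ v z I

theorem re_mul_complexGradient (v : ℂ → ℝ) (z w : ℂ) :
    (w * complexGradient v z).re = fderiv ℝ v z w := by
  have hw : w = w.re • (1 : ℂ) + w.im • I := by simp
  conv_rhs => rw [hw, map_add, map_smul, map_smul]
  simp [complexGradient]

theorem complexGradient_re {f : ℂ → ℂ} {z : ℂ} (hf : DifferentiableAt ℂ f z) :
    complexGradient (fun w => (f w).re) z = deriv f z := by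
  have hre : HasFDerivAt (fun w => (f w).re) _ z :=
    reCLM.hasFDerivAt.comp z (hf.hasDerivAt.hasFDerivAt.restrictScalars ℝ)
  rw [complexGradient, hre.fderiv]
  apply Complex.ext <;> simp

theorem exists_eqOn_re_const_mul_zpow_of_harmonicOnNhd {U : Set ℂ} (hUo : IsOpen U)
    (hUc : IsPreconnected U) (hU0 : 0 ∉ U) {v : ℂ → ℝ} {n : ℤ} (hn : n ≠ 0)
    (hv : HarmonicOnNhd v U) (heuler : ∀ z ∈ U, fderiv ℝ v z z = n * v z) :
    ∃ C : ℂ, EqOn v (fun z => (C * z ^ n).re) U := by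
  have hn' : (n : ℂ) ≠ 0 := Int.cast_ne_zero.2 hn
  set F : ℂ → ℂ := fun z => z * complexGradient v z / n
  have hF : DifferentiableOn ℂ F U := fun z hz =>
    ((differentiableAt_id.mul (HarmonicAt.differentiableAt_complex_partial (hv z hz))).div_const
      _).differentiableWithinAt
  have hre : EqOn v (fun z => (F z).re) U := fun z hz => by
    simp only [F, div_intCast_re, re_mul_complexGradient, heuler z hz]
    exact (mul_div_cancel_left₀ _ (Int.cast_ne_zero.2 hn)).symm
  have hderiv : ∀ z ∈ U, deriv F z = complexGradient v z := fun z hz => by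
    have hU := hUo.mem_nhds hz
    rw [← complexGradient_re (hF.differentiableAt hU), complexGradient, complexGradient,
      (hre.eventuallyEq_of_mem hU).fderiv_eq]
  obtain ⟨C, hC⟩ := exists_eqOn_const_mul_zpow_of_mul_deriv_eq hUo hUc hU0 hF fun z hz => by
    rw [hderiv z hz, mul_div_cancel₀ _ hn']
  exact ⟨C, fun z hz => (hre hz).trans (congrArg re (hC hz))⟩

theorem exists_eqOn_re_const_mul_pow_of_homogeneous_rightHalfPlane {v : ℂ → ℝ} {j : ℕ}
    (hj : j ≠ 0) (hcont : ContinuousOn v {z | 0 ≤ z.re}) (hharm : HarmonicOnNhd v {z | 0 < z.re})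
    (hhom : ∀ l : ℝ, 0 < l → ∀ z : ℂ, 0 < z.re → v (l • z) = l ^ j * v z) :
    ∃ C : ℂ, EqOn v (fun z => (C * z ^ j).re) {z | 0 ≤ z.re} := by
  have heuler : ∀ z ∈ {z : ℂ | 0 < z.re}, fderiv ℝ v z z = (j : ℤ) * v z := fun z hz => by
    refine fderiv_apply_self_of_eventually_homogeneous
      ((hharm z hz).1.differentiableAt two_ne_zero) ?_
    filter_upwards [lt_mem_nhds one_pos] with l hl
    simpa using hhom l hl z hz
  obtain ⟨C, hC⟩ := exists_eqOn_re_const_mul_zpow_of_harmonicOnNhd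
    (isOpen_lt continuous_const continuous_re) (convex_halfSpace_re_gt 0).isPreconnected
    (by simp) (Int.natCast_ne_zero.2 hj) hharm heuler
  simp only [zpow_natCast] at hC
  exact ⟨C, hC.of_subset_closure hcont (by fun_prop) (fun z (hz : 0 < z.re) => hz.le)
    (closure_setOfPred_lt_re 0).ge⟩

theorem laplacian_comp_equivRealProdCLM {F : Type*} [NormedAddCommGroup F] [NormedSpace ℝ F]
    {u : ℝ × ℝ → F} {z : ℂ} (hu : ContDiffAt ℝ 2 u (equivRealProdCLM z)) :
    Laplacian.laplacian (u ∘ equivRealProdCLM) z =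
      fderiv ℝ (fun y => fderiv ℝ u y (1, 0)) (equivRealProdCLM z) (1, 0)
        + fderiv ℝ (fun y => fderiv ℝ u y (0, 1)) (equivRealProdCLM z) (0, 1) := by
  have hdiff : DifferentiableAt ℝ (fderiv ℝ u) (equivRealProdCLM z) :=
    (hu.fderiv_right (m := 1) le_rfl).differentiableAt one_ne_zero
  have hsnd (w : ℝ × ℝ) : fderiv ℝ (fun y => fderiv ℝ u y w) (equivRealProdCLM z) w
      = fderiv ℝ (fderiv ℝ u) (equivRealProdCLM z) w w := by
    rw [fderiv_clm_apply hdiff (differentiableAt_const w)]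
    simp
  have hiter : iteratedFDeriv ℝ 2 (u ∘ equivRealProdCLM) z
      = (iteratedFDeriv ℝ 2 u (equivRealProdCLM z)).compContinuousLinearMap
          fun _ => equivRealProdCLM := by
    simpa only [iteratedFDerivWithin_univ, preimage_univ] using
      equivRealProdCLM.iteratedFDerivWithin_comp_right u uniqueDiffOn_univ (mem_univ _) 2
  rw [hsnd, hsnd]
  simp [laplacian_eq_iteratedFDeriv_complexPlane, hiter, iteratedFDeriv_two_apply]

theorem harmonicOnNhd_comp_equivRealProdCLM {F : Type*} [NormedAddCommGroup F] [NormedSpace ℝ F]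
    {u : ℝ × ℝ → F} {s : Set (ℝ × ℝ)} (hs : IsOpen s) (hu : ContDiffOn ℝ 2 u s)
    (hlap : ∀ x ∈ s, fderiv ℝ (fun y => fderiv ℝ u y (1, 0)) x (1, 0)
      + fderiv ℝ (fun y => fderiv ℝ u y (0, 1)) x (0, 1) = 0) :
    HarmonicOnNhd (u ∘ equivRealProdCLM) (equivRealProdCLM ⁻¹' s) := by
  intro z hz
  have hC2 : ∀ w ∈ equivRealProdCLM ⁻¹' s, ContDiffAt ℝ 2 u (equivRealProdCLM w) := fun w hw =>
    hu.contDiffAt (hs.mem_nhds hw)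
  refine ⟨(hC2 z hz).comp z equivRealProdCLM.contDiff.contDiffAt, ?_⟩
  filter_upwards [(hs.preimage equivRealProdCLM.continuous).mem_nhds hz] with w hw
  exact (laplacian_comp_equivRealProdCLM (hC2 w hw)).trans (hlap _ hw)

theorem re_const_mul_pow_eq (C z : ℂ) (j : ℕ) :
    (C * z ^ j).re = (C * I ^ j).re * ((I * conj z) ^ j).re
      + (C * I ^ j).im * psi j (equivRealProdCLM z) := by
  have hpsi : psi j (equivRealProdCLM z) = ((I * conj z) ^ j).im := by
    have hz : conj z = z.re - I * z.im := by
      apply Complex.ext <;> simp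
    rw [psi, ← mul_pow, hz, equivRealProdCLM_apply]
  have hz : z = I * conj (I * conj z) := by
    simp [← mul_assoc]
  have hpow : C * z ^ j = C * I ^ j * conj ((I * conj z) ^ j) := by
    rw [map_pow, mul_assoc, ← mul_pow, ← hz]
  rw [hpow, hpsi, mul_re, conj_re, conj_im]
  ring

theorem homogeneous_harmonic_halfplane_eq_mul_psi_general (j : ℕ) (hj : 1 ≤ j) (u : ℝ × ℝ → ℝ)
    (hcont : ContinuousOn u {x : ℝ × ℝ | 0 ≤ x.1})
    (hC2 : ContDiffOn ℝ 2 u {x : ℝ × ℝ | 0 < x.1})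
    (hharm : ∀ x ∈ {x : ℝ × ℝ | 0 < x.1},
      fderiv ℝ (fun y => fderiv ℝ u y (1, 0)) x (1, 0)
        + fderiv ℝ (fun y => fderiv ℝ u y (0, 1)) x (0, 1) = 0)
    (hhom : ∀ l : ℝ, 0 < l → ∀ x : ℝ × ℝ, 0 < x.1 → u (l • x) = l ^ j * u x)
    (hbdry : u (0, 1) = 0) :
    ∃ c : ℝ, ∀ x : ℝ × ℝ, 0 ≤ x.1 → u x = c * psi j x := by
  obtain ⟨C, hC⟩ := exists_eqOn_re_const_mul_pow_of_homogeneous_rightHalfPlane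
    (v := u ∘ equivRealProdCLM) (Nat.one_le_iff_ne_zero.1 hj)
    (hcont.comp equivRealProdCLM.continuous.continuousOn fun _ hz => hz)
    (harmonicOnNhd_comp_equivRealProdCLM (isOpen_lt continuous_const continuous_fst) hC2 hharm)
    fun l hl z hz => by simpa using hhom l hl (equivRealProdCLM z) hz
  have hCI : (C * I ^ j).re = 0 := by
    simpa [hbdry] using (hC (show 0 ≤ I.re from le_rfl)).symm
  refine ⟨(C * I ^ j).im, fun x hx => ?_⟩
  obtain ⟨z, rfl⟩ := equivRealProdCLM.surjective x
  calc u (equivRealProdCLM z) = (C * z ^ j).re := hC hx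
    _ = (C * I ^ j).im * psi j (equivRealProdCLM z) := by
      rw [re_const_mul_pow_eq, hCI, zero_mul, zero_add]

/-- Any function continuous on the closed half-plane, harmonic on the open half-plane,
positively homogeneous of degree `j` and vanishing on the boundary is a multiple of `ψ_j`. -/
theorem homogeneous_harmonic_halfplane_eq_mul_psi (j : ℕ) (hj : 1 ≤ j) (u : ℝ × ℝ → ℝ)
    (hcont : ContinuousOn u {x : ℝ × ℝ | 0 ≤ x.1})
    (hC2 : ContDiffOn ℝ 2 u {x : ℝ × ℝ | 0 < x.1})
    (hharm : ∀ x ∈ {x : ℝ × ℝ | 0 < x.1},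
      fderiv ℝ (fun y => fderiv ℝ u y (1, 0)) x (1, 0)
        + fderiv ℝ (fun y => fderiv ℝ u y (0, 1)) x (0, 1) = 0)
    (hhom : ∀ l : ℝ, 0 < l → ∀ x : ℝ × ℝ, 0 ≤ x.1 → u (l • x) = l ^ j * u x)
    (hbdry : ∀ x₂ : ℝ, u (0, x₂) = 0) :
    ∃ c : ℝ, ∀ x : ℝ × ℝ, 0 ≤ x.1 → u x = c * psi j x :=
  homogeneous_harmonic_halfplane_eq_mul_psi_general j hj u hcont hC2 hharm
    (fun l hl x hx => hhom l hl x hx.le) (hbdry 1)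
end

section
/- Let j ≥ 1 be an integer, 0 < r₁ < r₂, and let u be a complex-valued function which is twice continuously differentiable on an open subset of ℝ² containing the closed half-annulus K = {x = (x₁,x₂) : r₁ ≤ |x| ≤ r₂, x₁ ≥ 0}, with Δu = 0 on that open set, and u(0, x₂) = 0 whenever r₁ ≤ |x₂| ≤ r₂. Define ω(r) = ∫_{−π/2}^{π/2} u(r cos t, r sin t) sin(j(π/2 − t)) dt for r ∈ [r₁, r₂]. Then ω is twice continuously differentiable on (r₁, r₂) and satisfies ω''(r) + ω'(r)/r − (j²/r²) ω(r) = 0 there (equivalently (r^{1+2j}(r^{−j}ω(r))')' = 0). -/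
/-!
In polar coordinates `v(r, θ) = u(r cos θ, r sin θ)` satisfies
`r² v_rr + r v_r + v_θθ = r² (Δu)(r cos θ, r sin θ) = 0`. The weight `s(θ) = sin (j(π/2 - θ))` is an
eigenfunction, `s'' = -j² s`, vanishing at `θ = ±π/2`, as does `v(r, ·)`; integrating by parts twice
therefore gives `∫ s v_θθ dθ = -j² ∫ s v dθ`, and pairing the polar equation with `s` turns it into
`r² ω'' + r ω' = j² ω`.
-/

open Filter MeasureTheory Set
open scoped Interval Topology

section DirectionalDerivative

variable {V V' E : Type*} [NormedAddCommGroup V] [NormedSpace ℝ V]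
  [NormedAddCommGroup V'] [NormedSpace ℝ V'] [NormedAddCommGroup E] [NormedSpace ℝ E]

/-- The directional derivative `∂_w f`, as an operator on functions: on `ℝ × ℝ` the directions
`(1, 0)` and `(0, 1)` give the two partial derivatives, so that compositions are iterated partial
derivatives. -/
noncomputable def dirDeriv (w : V) (f : V → E) : V → E := fun x ↦ fderiv ℝ f x w

lemma contDiffAt_dirDeriv {n m : WithTop ℕ∞} {f : V → E} {x : V} (hf : ContDiffAt ℝ n f x)
    (hmn : m + 1 ≤ n) (w : V) : ContDiffAt ℝ m (dirDeriv w f) x :=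
  (hf.fderiv_right hmn).clm_apply contDiffAt_const

lemma dirDeriv_comp {f : V' → E} {g : V → V'} {x : V} (hf : DifferentiableAt ℝ f (g x))
    (hg : DifferentiableAt ℝ g x) (w : V) :
    dirDeriv w (f ∘ g) x = fderiv ℝ f (g x) (dirDeriv w g x) := by
  rw [dirDeriv, fderiv_comp x hf hg, ContinuousLinearMap.comp_apply, dirDeriv]

lemma dirDeriv_dirDeriv_comp {f : V' → E} {g : V → V'} {x : V} (hf : ContDiffAt ℝ 2 f (g x))
    (hg : ContDiffAt ℝ 2 g x) (w : V) :
    dirDeriv w (dirDeriv w (f ∘ g)) x =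
      fderiv ℝ (fderiv ℝ f) (g x) (dirDeriv w g x) (dirDeriv w g x) +
        fderiv ℝ f (g x) (dirDeriv w (dirDeriv w g) x) := by
  have hfirst : dirDeriv w (f ∘ g) =ᶠ[𝓝 x] fun y ↦ fderiv ℝ f (g y) (dirDeriv w g y) := by
    filter_upwards [hg.continuousAt.eventually (hf.eventually (by simp)), hg.eventually (by simp)]
      with y hfy hgy
    exact dirDeriv_comp (hfy.differentiableAt two_ne_zero) (hgy.differentiableAt two_ne_zero) w
  have hDf : DifferentiableAt ℝ (fderiv ℝ f) (g x) :=
    (hf.fderiv_right (m := 1) (by norm_num)).differentiableAt one_ne_zero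
  have hgx : DifferentiableAt ℝ g x := hg.differentiableAt two_ne_zero
  have hdg : DifferentiableAt ℝ (dirDeriv w g) x :=
    (contDiffAt_dirDeriv hg (m := 1) (by norm_num) w).differentiableAt one_ne_zero
  have hsecond : HasFDerivAt (fun y ↦ fderiv ℝ f (g y) (dirDeriv w g y)) _ x :=
    (hDf.hasFDerivAt.comp x hgx.hasFDerivAt).clm_apply hdg.hasFDerivAt
  rw [dirDeriv, hfirst.fderiv_eq, hsecond.fderiv, add_apply, add_comm]
  rfl

lemma dirDeriv_dirDeriv {f : V → E} {x : V} (hf : ContDiffAt ℝ 2 f x) (w : V) :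
    dirDeriv w (dirDeriv w f) x = fderiv ℝ (fderiv ℝ f) x w w := by
  have hid : dirDeriv w (id : V → V) = fun _ ↦ w := by
    ext1 y
    simp only [dirDeriv, fderiv_id, ContinuousLinearMap.id_apply]
  have hconst : dirDeriv w (fun _ : V ↦ w) x = 0 := by
    simp only [dirDeriv, fderiv_fun_const, Pi.zero_apply, zero_apply]
  simpa only [Function.comp_id, id_eq, hid, hconst, map_zero, add_zero]
    using dirDeriv_dirDeriv_comp (g := id) hf contDiffAt_id w

end DirectionalDerivative

section PolarLaplacian

variable {E : Type*} [NormedAddCommGroup E] [NormedSpace ℝ E]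

/-- The Laplacian `∂²u/∂x₁² + ∂²u/∂x₂²` on the plane `ℝ × ℝ`. The product carries the sup norm, so
Mathlib's Laplacian on inner product spaces is not available here. -/
noncomputable def planeLaplacian (u : ℝ × ℝ → E) (x : ℝ × ℝ) : E :=
  dirDeriv (1, 0) (dirDeriv (1, 0) u) x + dirDeriv (0, 1) (dirDeriv (0, 1) u) x

lemma contDiff_polarCoord_symm {n : WithTop ℕ∞} : ContDiff ℝ n polarCoord.symm := by
  rw [show ⇑polarCoord.symm = _ from funext polarCoord_symm_apply]
  fun_prop

lemma contDiffAt_comp_polarCoord_symm {n : WithTop ℕ∞} {u : ℝ × ℝ → E} {q : ℝ × ℝ}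
    (hu : ContDiffAt ℝ n u (polarCoord.symm q)) : ContDiffAt ℝ n (u ∘ polarCoord.symm) q :=
  hu.comp q contDiff_polarCoord_symm.contDiffAt

lemma dirDeriv_radius_polarCoord_symm :
    dirDeriv (1, 0) polarCoord.symm = fun q : ℝ × ℝ ↦ (Real.cos q.2, Real.sin q.2) := by
  ext1 q
  rw [dirDeriv, (hasFDerivAt_polarCoord_symm q).fderiv]
  simp [fderivPolarCoordSymm]

lemma dirDeriv_angle_polarCoord_symm :
    dirDeriv (0, 1) polarCoord.symm =
      fun q : ℝ × ℝ ↦ q.1 • (-Real.sin q.2, Real.cos q.2) := by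
  ext1 q
  rw [dirDeriv, (hasFDerivAt_polarCoord_symm q).fderiv]
  simp [fderivPolarCoordSymm]

lemma dirDeriv_radius_radius_polarCoord_symm (q : ℝ × ℝ) :
    dirDeriv (1, 0) (dirDeriv (1, 0) polarCoord.symm) q = 0 := by
  have hderiv : HasFDerivAt (fun q : ℝ × ℝ ↦ (Real.cos q.2, Real.sin q.2)) _ q :=
    hasFDerivAt_snd.cos.prodMk hasFDerivAt_snd.sin
  rw [dirDeriv_radius_polarCoord_symm, dirDeriv, hderiv.fderiv]
  simp

lemma dirDeriv_angle_angle_polarCoord_symm (q : ℝ × ℝ) :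
    dirDeriv (0, 1) (dirDeriv (0, 1) polarCoord.symm) q =
      -q.1 • (Real.cos q.2, Real.sin q.2) := by
  have hderiv : HasFDerivAt (fun q : ℝ × ℝ ↦ q.1 • (-Real.sin q.2, Real.cos q.2)) _ q :=
    hasFDerivAt_fst.fun_smul (hasFDerivAt_snd.sin.fun_neg.prodMk hasFDerivAt_snd.cos)
  rw [dirDeriv_angle_polarCoord_symm, dirDeriv, hderiv.fderiv]
  simp

lemma bilinear_trace_rotate (B : ℝ × ℝ →L[ℝ] ℝ × ℝ →L[ℝ] E) (θ : ℝ) :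
    B (Real.cos θ, Real.sin θ) (Real.cos θ, Real.sin θ) +
      B (-Real.sin θ, Real.cos θ) (-Real.sin θ, Real.cos θ) =
      B (1, 0) (1, 0) + B (0, 1) (0, 1) := by
  have expand (c d : ℝ) : B (c, d) (c, d) = c ^ 2 • B (1, 0) (1, 0) +
      (c * d) • (B (1, 0) (0, 1) + B (0, 1) (1, 0)) + d ^ 2 • B (0, 1) (0, 1) := by
    rw [show ((c, d) : ℝ × ℝ) = c • (1, 0) + d • (0, 1) by simp]
    simp only [map_add, map_smul, add_apply, smul_apply]
    module
  rw [expand (Real.cos θ), expand (-Real.sin θ), Real.cos_sq']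
  module

lemma polar_laplacian {u : ℝ × ℝ → E} {q : ℝ × ℝ} (hu : ContDiffAt ℝ 2 u (polarCoord.symm q)) :
    q.1 ^ 2 • dirDeriv (1, 0) (dirDeriv (1, 0) (u ∘ polarCoord.symm)) q +
        q.1 • dirDeriv (1, 0) (u ∘ polarCoord.symm) q +
        dirDeriv (0, 1) (dirDeriv (0, 1) (u ∘ polarCoord.symm)) q =
      q.1 ^ 2 • planeLaplacian u (polarCoord.symm q) := by
  have hP : ContDiffAt ℝ 2 polarCoord.symm q := contDiff_polarCoord_symm.contDiffAt
  rw [planeLaplacian, dirDeriv_dirDeriv hu, dirDeriv_dirDeriv hu, ← bilinear_trace_rotate _ q.2,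
    dirDeriv_dirDeriv_comp hu hP, dirDeriv_dirDeriv_comp hu hP,
    dirDeriv_comp (hu.differentiableAt two_ne_zero) (hP.differentiableAt two_ne_zero),
    dirDeriv_radius_radius_polarCoord_symm, dirDeriv_angle_angle_polarCoord_symm,
    dirDeriv_radius_polarCoord_symm, dirDeriv_angle_polarCoord_symm]
  simp only [map_smul, map_zero, smul_apply]
  module

end PolarLaplacian

section ParametricIntegral

variable {E : Type*} [NormedAddCommGroup E]

lemma exists_eventually_forall_norm_le {X Y : Type*} [TopologicalSpace X] [TopologicalSpace Y]
    {K : Set Y} (hK : IsCompact K) {F : X × Y → E} {x : X}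
    (hF : ∀ t ∈ K, ContinuousAt F (x, t)) : ∃ C, ∀ᶠ y in 𝓝 x, ∀ t ∈ K, ‖F (y, t)‖ ≤ C := by
  have hslice : ContinuousOn (fun t ↦ F (x, t)) K := fun t ht ↦
    ((hF t ht).comp (Continuous.prodMk_right x).continuousAt).continuousWithinAt
  obtain ⟨C, hC⟩ := hK.exists_bound_of_continuousOn hslice
  refine ⟨C + 1, hK.eventually_forall_of_forall_eventually fun t ht ↦ ?_⟩
  exact (hF t ht).norm.eventually_le_const (by linarith [hC t ht])

variable [NormedSpace ℝ E]

lemma eventually_forall_contDiffAt {X Y : Type*} [NormedAddCommGroup X] [NormedSpace ℝ X]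
    [NormedAddCommGroup Y] [NormedSpace ℝ Y] {K : Set Y} (hK : IsCompact K) {n : ℕ}
    {F : X × Y → E} {x : X} (hF : ∀ t ∈ K, ContDiffAt ℝ n F (x, t)) :
    ∀ᶠ y in 𝓝 x, ∀ t ∈ K, ContDiffAt ℝ n F (y, t) :=
  hK.eventually_forall_of_forall_eventually fun t ht ↦ (hF t ht).eventually (by simp)

variable {F F' : ℝ × ℝ → E} {a b x : ℝ}

lemma continuousAt_intervalIntegral
    (hslice : ∀ᶠ y in 𝓝 x, ContinuousOn (fun t ↦ F (y, t)) [[a, b]])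
    (hF : ∀ t ∈ [[a, b]], ContinuousAt F (x, t)) :
    ContinuousAt (fun y ↦ ∫ t in a..b, F (y, t)) x := by
  obtain ⟨C, hC⟩ := exists_eventually_forall_norm_le isCompact_uIcc hF
  refine intervalIntegral.continuousAt_of_dominated_interval (bound := fun _ ↦ C) ?_ ?_
    intervalIntegrable_const (ae_of_all _ fun t ht ↦ ?_)
  · exact hslice.mono fun y hy ↦ hy.intervalIntegrable.aestronglyMeasurable_restrict_uIoc
  · exact hC.mono fun y hy ↦ ae_of_all _ fun t ht ↦ hy t (uIoc_subset_uIcc ht)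
  · exact (hF t (uIoc_subset_uIcc ht)).comp (f := (·, t)) (Continuous.prodMk_left t).continuousAt

lemma hasDerivAt_intervalIntegral
    (hslice : ∀ᶠ y in 𝓝 x, ContinuousOn (fun t ↦ F (y, t)) [[a, b]])
    (hF' : ∀ t ∈ [[a, b]], ContinuousAt F' (x, t))
    (hderiv : ∀ᶠ y in 𝓝 x, ∀ t ∈ [[a, b]], HasDerivAt (fun z ↦ F (z, t)) (F' (y, t)) y) :
    HasDerivAt (fun y ↦ ∫ t in a..b, F (y, t)) (∫ t in a..b, F' (x, t)) x := by
  obtain ⟨C, hC⟩ := exists_eventually_forall_norm_le isCompact_uIcc hF'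
  have hslice' : ContinuousOn (fun t ↦ F' (x, t)) [[a, b]] := fun t ht ↦
    ((hF' t ht).comp (Continuous.prodMk_right x).continuousAt).continuousWithinAt
  refine (intervalIntegral.hasDerivAt_integral_of_dominated_loc_of_deriv_le
    (F' := fun y t ↦ F' (y, t)) (bound := fun _ ↦ C) (hC.and hderiv) ?_ ?_ ?_
    (ae_of_all _ fun t ht y hy ↦ hy.1 t (uIoc_subset_uIcc ht)) intervalIntegrable_const
    (ae_of_all _ fun t ht y hy ↦ hy.2 t (uIoc_subset_uIcc ht))).2
  · exact hslice.mono fun y hy ↦ hy.intervalIntegrable.aestronglyMeasurable_restrict_uIoc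
  · exact hslice.self_of_nhds.intervalIntegrable
  · exact hslice'.intervalIntegrable.aestronglyMeasurable_restrict_uIoc

end ParametricIntegral

section AngularCoefficient

variable {E : Type*} [NormedAddCommGroup E] [NormedSpace ℝ E]
  {a b r : ℝ} {s s' : ℝ → ℝ} {v : ℝ × ℝ → E}

/-- The coefficient `r ↦ ∫ θ in a..b, s θ • v (r, θ)` of a function `v` of polar coordinates
`(r, θ)` against an angular weight `s`. -/
noncomputable def angularCoeff (a b : ℝ) (s : ℝ → ℝ) (v : ℝ × ℝ → E) (r : ℝ) : E :=
  ∫ θ in a..b, s θ • v (r, θ)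

lemma continuousOn_angularSlice (hs : Continuous s)
    (hv : ∀ θ ∈ [[a, b]], ContinuousAt v (r, θ)) :
    ContinuousOn (fun θ ↦ s θ • v (r, θ)) [[a, b]] := fun θ hθ ↦
  (hs.continuousAt.smul
    ((hv θ hθ).comp (Continuous.prodMk_right r).continuousAt)).continuousWithinAt

lemma hasDerivAt_angularCoeff (hs : Continuous s)
    (hv : ∀ θ ∈ [[a, b]], ContDiffAt ℝ 1 v (r, θ)) :
    HasDerivAt (angularCoeff a b s v) (angularCoeff a b s (dirDeriv (1, 0) v) r) r := by
  have hnear := eventually_forall_contDiffAt isCompact_uIcc (n := 1) hv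
  refine hasDerivAt_intervalIntegral (F := fun q ↦ s q.2 • v q)
    (F' := fun q ↦ s q.2 • dirDeriv (1, 0) v q) ?_ (fun θ hθ ↦ ?_) ?_
  · exact hnear.mono fun ρ hρ ↦ continuousOn_angularSlice hs fun θ hθ ↦ (hρ θ hθ).continuousAt
  · exact (hs.comp continuous_snd).continuousAt.smul
      (contDiffAt_dirDeriv (hv θ hθ) (m := 0) (by simp) _).continuousAt
  · refine hnear.mono fun ρ hρ θ hθ ↦ ?_
    have hradius : HasDerivAt (fun z ↦ (z, θ)) ((1, 0) : ℝ × ℝ) ρ :=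
      (hasDerivAt_id ρ).prodMk (hasDerivAt_const ρ θ)
    exact ((((hρ θ hθ).differentiableAt one_ne_zero).hasFDerivAt).comp_hasDerivAt ρ
      hradius).const_smul (s θ)

lemma contDiffAt_angularCoeff (hs : Continuous s) (n : ℕ)
    (hv : ∀ θ ∈ [[a, b]], ContDiffAt ℝ n v (r, θ)) :
    ContDiffAt ℝ n (angularCoeff a b s v) r := by
  induction n generalizing v with
  | zero =>
    have hnear := eventually_forall_contDiffAt isCompact_uIcc hv
    refine contDiffAt_zero.2 ⟨_, hnear.eventually_nhds, fun ρ hρ ↦ ?_⟩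
    refine (continuousAt_intervalIntegral (F := fun q ↦ s q.2 • v q) ?_ fun θ hθ ↦
      (hs.comp continuous_snd).continuousAt.smul
        (hρ.self_of_nhds θ hθ).continuousAt).continuousWithinAt
    exact hρ.mono fun τ hτ ↦ continuousOn_angularSlice hs fun θ hθ ↦ (hτ θ hθ).continuousAt
  | succ n ih =>
    have hnear := eventually_forall_contDiffAt isCompact_uIcc hv
    refine contDiffAt_succ_iff_hasFDerivAt.2 ⟨_, ⟨_, hnear,
      fun ρ hρ ↦ (hasDerivAt_angularCoeff hs fun θ hθ ↦ (hρ θ hθ).of_le ?_).hasFDerivAt⟩, ?_⟩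
    · exact_mod_cast Nat.le_add_left 1 n
    · exact ContinuousLinearMap.toSpanSingletonCLE.contDiff.contDiffAt.comp r
        (ih fun θ hθ ↦ contDiffAt_dirDeriv (hv θ hθ) (by push_cast; rfl) _)

lemma deriv_deriv_angularCoeff (hs : Continuous s)
    (hv : ∀ θ ∈ [[a, b]], ContDiffAt ℝ 2 v (r, θ)) :
    deriv (deriv (angularCoeff a b s v)) r =
      angularCoeff a b s (dirDeriv (1, 0) (dirDeriv (1, 0) v)) r := by
  have hfirst : deriv (angularCoeff a b s v) =ᶠ[𝓝 r] angularCoeff a b s (dirDeriv (1, 0) v) :=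
    (eventually_forall_contDiffAt isCompact_uIcc (n := 2) hv).mono fun ρ hρ ↦
      (hasDerivAt_angularCoeff hs fun θ hθ ↦ (hρ θ hθ).of_le one_le_two).deriv
  rw [hfirst.deriv_eq]
  exact (hasDerivAt_angularCoeff hs fun θ hθ ↦
    contDiffAt_dirDeriv (hv θ hθ) (by norm_num) _).deriv

lemma integral_smul_deriv2_eq_deriv2_smul [CompleteSpace E] {s'' : ℝ → ℝ} {g g' g'' : ℝ → E}
    (hs : ∀ θ ∈ [[a, b]], HasDerivAt s (s' θ) θ) (hs' : ∀ θ ∈ [[a, b]], HasDerivAt s' (s'' θ) θ)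
    (hs'' : IntervalIntegrable s'' volume a b)
    (hg : ∀ θ ∈ [[a, b]], HasDerivAt g (g' θ) θ) (hg' : ∀ θ ∈ [[a, b]], HasDerivAt g' (g'' θ) θ)
    (hg'' : IntervalIntegrable g'' volume a b)
    (hsa : s a = 0) (hsb : s b = 0) (hga : g a = 0) (hgb : g b = 0) :
    ∫ θ in a..b, s θ • g'' θ = ∫ θ in a..b, s'' θ • g θ := by
  have integrable_s' : IntervalIntegrable s' volume a b :=
    (HasDerivAt.continuousOn hs').intervalIntegrable
  have integrable_g' : IntervalIntegrable g' volume a b :=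
    (HasDerivAt.continuousOn hg').intervalIntegrable
  calc ∫ θ in a..b, s θ • g'' θ = -∫ θ in a..b, s' θ • g' θ := by
        rw [intervalIntegral.integral_smul_deriv_eq_deriv_smul hs hg' integrable_s' hg'', hsa, hsb]
        simp only [zero_smul, sub_self, zero_sub]
    _ = ∫ θ in a..b, s'' θ • g θ := by
        rw [intervalIntegral.integral_smul_deriv_eq_deriv_smul hs' hg hs'' integrable_g', hga, hgb]
        simp only [smul_zero, sub_self, zero_sub, neg_neg]

lemma angularCoeff_dirDeriv_angle_angle [CompleteSpace E] {μ : ℝ}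
    (hs : ∀ θ, HasDerivAt s (s' θ) θ) (hs' : ∀ θ, HasDerivAt s' (-μ * s θ) θ)
    (hv : ∀ θ ∈ [[a, b]], ContDiffAt ℝ 2 v (r, θ))
    (hsa : s a = 0) (hsb : s b = 0) (hva : v (r, a) = 0) (hvb : v (r, b) = 0) :
    angularCoeff a b s (dirDeriv (0, 1) (dirDeriv (0, 1) v)) r = -μ • angularCoeff a b s v r := by
  have hangle (θ : ℝ) : HasDerivAt (fun θ ↦ (r, θ)) ((0, 1) : ℝ × ℝ) θ :=
    (hasDerivAt_const θ r).prodMk (hasDerivAt_id θ)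
  have hv' (θ : ℝ) (hθ : θ ∈ [[a, b]]) : ContDiffAt ℝ 1 (dirDeriv (0, 1) v) (r, θ) :=
    contDiffAt_dirDeriv (hv θ hθ) (by norm_num) _
  have hs_cont : Continuous s := continuous_iff_continuousAt.2 fun θ ↦ (hs θ).continuousAt
  have hv''_slice : ContinuousOn (fun θ ↦ dirDeriv (0, 1) (dirDeriv (0, 1) v) (r, θ)) [[a, b]] :=
    fun θ hθ ↦ ((contDiffAt_dirDeriv (hv' θ hθ) (m := 0) (by simp) _).continuousAt.comp
      (hangle θ).continuousAt).continuousWithinAt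
  calc angularCoeff a b s (dirDeriv (0, 1) (dirDeriv (0, 1) v)) r
      = ∫ θ in a..b, (-μ * s θ) • v (r, θ) :=
        integral_smul_deriv2_eq_deriv2_smul (fun θ _ ↦ hs θ) (fun θ _ ↦ hs' θ)
          ((hs_cont.const_mul (-μ)).intervalIntegrable a b)
          (fun θ hθ ↦ ((hv θ hθ).differentiableAt two_ne_zero).hasFDerivAt.comp_hasDerivAt θ
            (hangle θ))
          (fun θ hθ ↦ ((hv' θ hθ).differentiableAt one_ne_zero).hasFDerivAt.comp_hasDerivAt θ
            (hangle θ))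
          hv''_slice.intervalIntegrable hsa hsb hva hvb
    _ = -μ • angularCoeff a b s v r := by
        simp only [mul_smul, intervalIntegral.integral_smul, angularCoeff]

theorem angularCoeff_euler_ode [CompleteSpace E] {μ : ℝ}
    (hs : ∀ θ, HasDerivAt s (s' θ) θ) (hs' : ∀ θ, HasDerivAt s' (-μ * s θ) θ)
    (hv : ∀ θ ∈ [[a, b]], ContDiffAt ℝ 2 v (r, θ))
    (hsa : s a = 0) (hsb : s b = 0) (hva : v (r, a) = 0) (hvb : v (r, b) = 0)
    (hpolar : ∀ θ ∈ [[a, b]], r ^ 2 • dirDeriv (1, 0) (dirDeriv (1, 0) v) (r, θ) +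
      r • dirDeriv (1, 0) v (r, θ) + dirDeriv (0, 1) (dirDeriv (0, 1) v) (r, θ) = 0) :
    r ^ 2 • deriv (deriv (angularCoeff a b s v)) r + r • deriv (angularCoeff a b s v) r =
      μ • angularCoeff a b s v r := by
  have hs_cont : Continuous s := continuous_iff_continuousAt.2 fun θ ↦ (hs θ).continuousAt
  have hv' (w : ℝ × ℝ) (θ : ℝ) (hθ : θ ∈ [[a, b]]) : ContDiffAt ℝ 1 (dirDeriv w v) (r, θ) :=
    contDiffAt_dirDeriv (hv θ hθ) (by norm_num) _
  have hcont_r : ContinuousOn (fun θ ↦ s θ • dirDeriv (1, 0) v (r, θ)) [[a, b]] :=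
    continuousOn_angularSlice hs_cont fun θ hθ ↦ (hv' _ θ hθ).continuousAt
  have hcont_rr : ContinuousOn
      (fun θ ↦ s θ • dirDeriv (1, 0) (dirDeriv (1, 0) v) (r, θ)) [[a, b]] :=
    continuousOn_angularSlice hs_cont fun θ hθ ↦
      (contDiffAt_dirDeriv (hv' _ θ hθ) (m := 0) (by simp) _).continuousAt
  have hpaired : angularCoeff a b s (dirDeriv (0, 1) (dirDeriv (0, 1) v)) r =
      -(r ^ 2 • angularCoeff a b s (dirDeriv (1, 0) (dirDeriv (1, 0) v)) r +
        r • angularCoeff a b s (dirDeriv (1, 0) v) r) := by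
    simp only [angularCoeff]
    rw [← intervalIntegral.integral_smul, ← intervalIntegral.integral_smul,
      ← intervalIntegral.integral_add (hcont_rr.fun_const_smul _).intervalIntegrable
        (hcont_r.fun_const_smul _).intervalIntegrable,
      ← intervalIntegral.integral_neg]
    refine intervalIntegral.integral_congr fun θ hθ ↦ ?_
    simp only [eq_neg_of_add_eq_zero_right (hpolar θ hθ)]
    module
  rw [angularCoeff_dirDeriv_angle_angle hs hs' hv hsa hsb hva hvb, neg_smul, neg_inj] at hpaired
  rw [deriv_deriv_angularCoeff hs_cont hv, hpaired,
    (hasDerivAt_angularCoeff hs_cont fun θ hθ ↦ (hv θ hθ).of_le one_le_two).deriv]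

theorem angularCoeff_polarCoord_euler_ode [CompleteSpace E] {μ : ℝ} {u : ℝ × ℝ → E}
    (hs : ∀ θ, HasDerivAt s (s' θ) θ) (hs' : ∀ θ, HasDerivAt s' (-μ * s θ) θ)
    (hu : ∀ θ ∈ [[a, b]], ContDiffAt ℝ 2 u (polarCoord.symm (r, θ)))
    (hharm : ∀ θ ∈ [[a, b]], planeLaplacian u (polarCoord.symm (r, θ)) = 0)
    (hsa : s a = 0) (hsb : s b = 0)
    (hua : u (polarCoord.symm (r, a)) = 0) (hub : u (polarCoord.symm (r, b)) = 0) :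
    r ^ 2 • deriv (deriv (angularCoeff a b s (u ∘ polarCoord.symm))) r +
        r • deriv (angularCoeff a b s (u ∘ polarCoord.symm)) r =
      μ • angularCoeff a b s (u ∘ polarCoord.symm) r :=
  angularCoeff_euler_ode hs hs' (fun θ hθ ↦ contDiffAt_comp_polarCoord_symm (hu θ hθ))
    hsa hsb hua hub fun θ hθ ↦ by rw [polar_laplacian (hu θ hθ), hharm θ hθ, smul_zero]

end AngularCoefficient

section HalfAnnulus

lemma hasDerivAt_sin_mul_sub (c α θ : ℝ) :
    HasDerivAt (fun t ↦ Real.sin (c * (α - t))) (-c * Real.cos (c * (α - θ))) θ :=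
  (((hasDerivAt_id' θ).const_sub α).const_mul c).sin.congr_deriv (by ring)

lemma hasDerivAt_neg_mul_cos_mul_sub (c α θ : ℝ) :
    HasDerivAt (fun t ↦ -c * Real.cos (c * (α - t))) (-c ^ 2 * Real.sin (c * (α - θ))) θ :=
  ((((hasDerivAt_id' θ).const_sub α).const_mul c).cos.const_mul (-c)).congr_deriv (by ring)

lemma polarCoord_symm_mem_halfAnnulus {r₁ r₂ r θ : ℝ} (hr₁ : 0 ≤ r₁) (hr : r ∈ Ioo r₁ r₂)
    (hθ : θ ∈ [[-(Real.pi / 2), Real.pi / 2]]) :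
    polarCoord.symm (r, θ) ∈
      {x : ℝ × ℝ | r₁ < √(x.1 ^ 2 + x.2 ^ 2) ∧ √(x.1 ^ 2 + x.2 ^ 2) < r₂ ∧ 0 ≤ x.1} := by
  have hr0 : 0 ≤ r := hr₁.trans hr.1.le
  have hnorm : √((r * Real.cos θ) ^ 2 + (r * Real.sin θ) ^ 2) = r := by
    rw [mul_pow, mul_pow, ← mul_add, Real.cos_sq_add_sin_sq, mul_one, Real.sqrt_sq hr0]
  rw [uIcc_of_le (neg_le_self Real.pi_div_two_pos.le)] at hθ
  rw [polarCoord_symm_apply, mem_ofPred_eq, hnorm]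
  exact ⟨hr.1, hr.2, mul_nonneg hr0 (Real.cos_nonneg_of_mem_Icc hθ)⟩

theorem fourier_coeff_ode_general {E : Type*} [NormedAddCommGroup E] [NormedSpace ℝ E]
    [CompleteSpace E] (j : ℕ) {r₁ r₂ : ℝ} (hr₁ : 0 ≤ r₁) {U : Set (ℝ × ℝ)} (hU : IsOpen U)
    (hKU : {x : ℝ × ℝ | r₁ < √(x.1 ^ 2 + x.2 ^ 2) ∧ √(x.1 ^ 2 + x.2 ^ 2) < r₂ ∧ 0 ≤ x.1} ⊆ U)
    {u : ℝ × ℝ → E} (hu : ContDiffOn ℝ 2 u U) (hharm : ∀ x ∈ U, planeLaplacian u x = 0)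
    (hbc : ∀ x₂ : ℝ, r₁ < |x₂| → |x₂| < r₂ → u (0, x₂) = 0) {ω : ℝ → E}
    (hω : ∀ r, ω r = ∫ t in (-(Real.pi / 2))..(Real.pi / 2),
      Real.sin (j * (Real.pi / 2 - t)) • u (r * Real.cos t, r * Real.sin t)) :
    ContDiffOn ℝ 2 ω (Ioo r₁ r₂) ∧ ∀ r ∈ Ioo r₁ r₂,
      deriv (deriv ω) r + r⁻¹ • deriv ω r - ((j : ℝ) ^ 2 / r ^ 2) • ω r = 0 := by
  obtain rfl : ω = angularCoeff (-(Real.pi / 2)) (Real.pi / 2)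
    (fun t ↦ Real.sin (j * (Real.pi / 2 - t))) (u ∘ polarCoord.symm) := funext hω
  have hmem {r : ℝ} (hr : r ∈ Ioo r₁ r₂) (θ : ℝ) (hθ : θ ∈ [[-(Real.pi / 2), Real.pi / 2]]) :
      polarCoord.symm (r, θ) ∈ U := hKU (polarCoord_symm_mem_halfAnnulus hr₁ hr hθ)
  have hu_at {r : ℝ} (hr : r ∈ Ioo r₁ r₂) (θ : ℝ) (hθ : θ ∈ [[-(Real.pi / 2), Real.pi / 2]]) :
      ContDiffAt ℝ 2 u (polarCoord.symm (r, θ)) := hu.contDiffAt (hU.mem_nhds (hmem hr θ hθ))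
  refine ⟨fun r hr ↦ (contDiffAt_angularCoeff (by fun_prop) 2 fun θ hθ ↦
    contDiffAt_comp_polarCoord_symm (hu_at hr θ hθ)).contDiffWithinAt, fun r hr ↦ ?_⟩
  have hr0 : 0 < r := hr₁.trans_lt hr.1
  have hboundary (x₂ : ℝ) (hx₂ : |x₂| = r) : u (0, x₂) = 0 :=
    hbc x₂ (hx₂ ▸ hr.1) (hx₂ ▸ hr.2)
  have heuler := angularCoeff_polarCoord_euler_ode (hasDerivAt_sin_mul_sub j (Real.pi / 2))
    (hasDerivAt_neg_mul_cos_mul_sub j (Real.pi / 2)) (hu_at hr)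
    (fun θ hθ ↦ hharm _ (hmem hr θ hθ))
    (by simp only [sub_neg_eq_add, add_halves, Real.sin_nat_mul_pi])
    (by simp only [sub_self, mul_zero, Real.sin_zero])
    (by simpa using hboundary (-r) (by rw [abs_neg, abs_of_pos hr0]))
    (by simpa using hboundary r (abs_of_pos hr0))
  rw [← smul_eq_zero_iff_right (pow_ne_zero 2 hr0.ne'), ← sub_eq_zero.2 heuler]
  match_scalars <;> field_simp

end HalfAnnulus

/-- The `j`-th Fourier sine coefficient `ω(r) = ∫_{-π/2}^{π/2} u(r cos t, r sin t)
sin(j(π/2 - t)) dt` of a harmonic function on a half-annulus of the half-plane,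
vanishing on the flat part of the boundary, is `C²` and satisfies
`ω'' + ω'/r - (j²/r²) ω = 0`. -/
theorem fourier_coeff_ode (j : ℕ) (hj : 1 ≤ j) (r₁ r₂ : ℝ) (hr₁ : 0 < r₁) (hr₁₂ : r₁ < r₂)
    (U : Set (ℝ × ℝ)) (hU : IsOpen U)
    (hKU : {x : ℝ × ℝ | r₁ ≤ Real.sqrt (x.1 ^ 2 + x.2 ^ 2)
        ∧ Real.sqrt (x.1 ^ 2 + x.2 ^ 2) ≤ r₂ ∧ 0 ≤ x.1} ⊆ U)
    (u : ℝ × ℝ → ℂ) (hu : ContDiffOn ℝ 2 u U)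
    (hharm : ∀ x ∈ U,
      fderiv ℝ (fun y => fderiv ℝ u y (1, 0)) x (1, 0)
        + fderiv ℝ (fun y => fderiv ℝ u y (0, 1)) x (0, 1) = 0)
    (hbc : ∀ x₂ : ℝ, r₁ ≤ |x₂| → |x₂| ≤ r₂ → u (0, x₂) = 0)
    (ω : ℝ → ℂ)
    (hω : ∀ r : ℝ, ω r = ∫ t in (-(Real.pi / 2))..(Real.pi / 2),
        u (r * Real.cos t, r * Real.sin t)
          * (Real.sin ((j : ℝ) * (Real.pi / 2 - t)) : ℂ)) :
    ContDiffOn ℝ 2 ω (Set.Ioo r₁ r₂) ∧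
      ∀ r ∈ Set.Ioo r₁ r₂,
        deriv (deriv ω) r + deriv ω r / (r : ℂ)
          - (((j : ℝ) ^ 2 / r ^ 2 : ℝ) : ℂ) * ω r = 0 := by
  simpa only [Complex.real_smul, Complex.ofReal_inv, inv_mul_eq_div] using
    fourier_coeff_ode_general j hr₁.le hU (fun x hx ↦ hKU ⟨hx.1.le, hx.2.1.le, hx.2.2⟩) hu hharm
      (fun x₂ h₁ h₂ ↦ hbc x₂ h₁.le h₂.le) fun r ↦ by
        simpa only [Complex.real_smul, mul_comm] using hω r
end

section
/- Let j ≥ 1 be an integer. For x = (x₁, x₂) ∈ ℝ²_+, let θ̃₀(x) = arg(x₁ + i x₂) ∈ (−π/2, π/2) be the polar angle of x, let A₀(x) = (−x₂, x₁) / (2(x₁² + x₂²)), and define u : ℝ²_+ → ℂ by u(x) = e^{i θ̃₀(x)/2} ψ_j(x). Then u is smooth on ℝ²_+ and satisfies the Aharonov–Bohm equation pointwise: −Δu(x) + 2 i A₀(x) · ∇u(x) + |A₀(x)|² u(x) = 0 for every x ∈ ℝ²_+, i.e. (i∇ + A₀)² u = 0 in ℝ²_+. -/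
/-! Gauge argument: away from the pole, `A₀` is the gradient of half the polar angle `θ = Im log z`,
so `(i∇ + A₀)² (e^{iθ/2} f) = -e^{iθ/2} Δf`. The form `-Δu + 2i A₀ · ∇u + |A₀|² u` of the operator
omits `i (div A₀) u`, which is harmless because `div A₀ = Δθ / 2` vanishes, `θ` being the imaginary
part of a holomorphic function. Finally `Δψ_j = 0`, because `ψ_j = -Im((-iz)^j)`. The gauge
computation takes place on `ℂ` because `ℝ × ℝ`, with its sup norm, is not an inner product space. -/

open Complex InnerProductSpace Laplacian
open scoped ComplexConjugate ContDiff

section SecondDerivative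

variable {𝕜 E F 𝔸 : Type*} [NontriviallyNormedField 𝕜] [NormedAddCommGroup E] [NormedSpace 𝕜 E]
  [NormedAddCommGroup F] [NormedSpace 𝕜 F] [NormedCommRing 𝔸] [NormedAlgebra 𝕜 𝔸] {x : E}

lemma differentiableAt_fderiv {f : E → F} (hf : ContDiffAt 𝕜 2 f x) :
    DifferentiableAt 𝕜 (fderiv 𝕜 f) x :=
  (hf.fderiv_right (m := 1) (by norm_num)).differentiableAt one_ne_zero

lemma differentiableAt_fderiv_apply {f : E → F} (hf : ContDiffAt 𝕜 2 f x) (w : E) :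
    DifferentiableAt 𝕜 (fun y => fderiv 𝕜 f y w) x :=
  (differentiableAt_fderiv hf).clm_apply (differentiableAt_const w)

lemma iteratedFDeriv_two_eq_fderiv_fderiv {f : E → F} (hf : ContDiffAt 𝕜 2 f x) (v w : E) :
    iteratedFDeriv 𝕜 2 f x ![v, w] = fderiv 𝕜 (fun y => fderiv 𝕜 f y w) x v := by
  simp [iteratedFDeriv_two_apply,
    fderiv_clm_apply (differentiableAt_fderiv hf) (differentiableAt_const w)]

lemma iteratedFDeriv_two_mul {f g : E → 𝔸} (hf : ContDiffAt 𝕜 2 f x) (hg : ContDiffAt 𝕜 2 g x)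
    (v w : E) :
    iteratedFDeriv 𝕜 2 (fun y => f y * g y) x ![v, w] =
      f x * iteratedFDeriv 𝕜 2 g x ![v, w] + fderiv 𝕜 f x v * fderiv 𝕜 g x w
        + fderiv 𝕜 f x w * fderiv 𝕜 g x v + iteratedFDeriv 𝕜 2 f x ![v, w] * g x := by
  have hf₀ := hf.differentiableAt two_ne_zero
  have hg₀ := hg.differentiableAt two_ne_zero
  have hf' := differentiableAt_fderiv_apply hf w
  have hg' := differentiableAt_fderiv_apply hg w
  have hfirst : (fun y => fderiv 𝕜 (fun z => f z * g z) y w) =ᶠ[nhds x]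
      fun y => f y * fderiv 𝕜 g y w + fderiv 𝕜 f y w * g y := by
    filter_upwards [hf.eventually (by simp), hg.eventually (by simp)] with y hfy hgy
    rw [fderiv_fun_mul (hfy.differentiableAt two_ne_zero) (hgy.differentiableAt two_ne_zero)]
    simp [mul_comm]
  rw [iteratedFDeriv_two_eq_fderiv_fderiv (hf.mul hg), iteratedFDeriv_two_eq_fderiv_fderiv hf,
    iteratedFDeriv_two_eq_fderiv_fderiv hg, hfirst.fderiv_eq,
    fderiv_fun_add (hf₀.fun_mul hg') (hf'.fun_mul hg₀), fderiv_fun_mul hf₀ hg',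
    fderiv_fun_mul hf' hg₀]
  simp only [add_apply, smul_apply, smul_eq_mul]
  ring

lemma iteratedFDeriv_two_cexp [NormedAlgebra 𝕜 ℂ] {φ : E → ℂ} (hφ : ContDiffAt 𝕜 2 φ x)
    (v w : E) :
    iteratedFDeriv 𝕜 2 (fun y => exp (φ y)) x ![v, w] =
      exp (φ x) * (iteratedFDeriv 𝕜 2 φ x ![v, w] + fderiv 𝕜 φ x v * fderiv 𝕜 φ x w) := by
  have hφ₀ := hφ.differentiableAt two_ne_zero
  have hφ' := differentiableAt_fderiv_apply hφ w
  have hfirst : (fun y => fderiv 𝕜 (fun z => exp (φ z)) y w) =ᶠ[nhds x]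
      fun y => exp (φ y) * fderiv 𝕜 φ y w := by
    filter_upwards [hφ.eventually (by simp)] with y hy
    simp [(hy.differentiableAt two_ne_zero).hasFDerivAt.cexp.fderiv]
  rw [iteratedFDeriv_two_eq_fderiv_fderiv hφ.cexp, iteratedFDeriv_two_eq_fderiv_fderiv hφ,
    hfirst.fderiv_eq, fderiv_fun_mul hφ₀.cexp hφ', hφ₀.hasFDerivAt.cexp.fderiv]
  simp only [add_apply, smul_apply, smul_eq_mul]
  ring

end SecondDerivative

section Gauge

variable {ι E F 𝔸 : Type*} [Fintype ι] [NormedAddCommGroup E] [InnerProductSpace ℝ E]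
  [NormedAddCommGroup F] [NormedSpace ℝ F] [NormedCommRing 𝔸] [NormedAlgebra ℝ 𝔸] {x : E}

lemma sum_inner_smul_map (b : OrthonormalBasis ι ℝ E) (L : E →L[ℝ] F) (a : E) :
    ∑ i, inner ℝ a (b i) • L (b i) = L a := by
  conv_rhs => rw [← b.sum_repr' a, map_sum]
  simp only [map_smul, real_inner_comm]

lemma contDiffAt_ofReal_comp {n : WithTop ℕ∞} {θ : E → ℝ} (hθ : ContDiffAt ℝ n θ x) :
    ContDiffAt ℝ n (fun y => (θ y : ℂ)) x :=
  ofRealCLM.contDiff.contDiffAt.comp x hθ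

lemma hasFDerivAt_I_mul_ofReal [CompleteSpace E] {θ : E → ℝ} {a : E} (hθ : HasGradientAt θ a x) :
    HasFDerivAt (fun y => I * (θ y : ℂ)) (I • ofRealCLM.comp (innerSL ℝ a)) x :=
  (ofRealCLM.hasFDerivAt.comp x hθ.hasFDerivAt).const_mul I

lemma fderiv_cexp_I_mul [CompleteSpace E] {θ : E → ℝ} {a : E} (hθ : HasGradientAt θ a x) (v : E) :
    fderiv ℝ (fun y => exp (I * θ y)) x v = exp (I * θ x) * (I * (inner ℝ a v : ℝ)) := by
  simp [(hasFDerivAt_I_mul_ofReal hθ).cexp.fderiv]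

variable [FiniteDimensional ℝ E]

lemma laplacian_mul {f g : E → 𝔸} (hf : ContDiffAt ℝ 2 f x) (hg : ContDiffAt ℝ 2 g x)
    (b : OrthonormalBasis ι ℝ E) :
    Δ (fun y => f y * g y) x =
      f x * Δ g x + 2 * ∑ i, fderiv ℝ f x (b i) * fderiv ℝ g x (b i) + Δ f x * g x := by
  simp only [laplacian_eq_iteratedFDeriv_orthonormalBasis _ b, iteratedFDeriv_two_mul hf hg,
    Finset.mul_sum, Finset.sum_mul, ← Finset.sum_add_distrib]
  exact Finset.sum_congr rfl fun i _ => by ring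

lemma laplacian_cexp {φ : E → ℂ} (hφ : ContDiffAt ℝ 2 φ x) (b : OrthonormalBasis ι ℝ E) :
    Δ (fun y => exp (φ y)) x = exp (φ x) * (Δ φ x + ∑ i, fderiv ℝ φ x (b i) ^ 2) := by
  simp only [laplacian_eq_iteratedFDeriv_orthonormalBasis _ b, iteratedFDeriv_two_cexp hφ,
    ← Finset.mul_sum, ← Finset.sum_add_distrib, pow_two]

lemma laplacian_cexp_I_mul {θ : E → ℝ} {a : E} (hθ : ContDiffAt ℝ 2 θ x)
    (hθ' : HasGradientAt θ a x) :
    Δ (fun y => exp (I * θ y)) x = exp (I * θ x) * (I * Δ θ x - ‖a‖ ^ 2) := by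
  let b := stdOrthonormalBasis ℝ E
  have hθc := contDiffAt_ofReal_comp hθ
  have hΔ : Δ (fun y => I * (θ y : ℂ)) x = I * Δ θ x :=
    (laplacian_smul I hθc).trans (congrArg (I * ·) (hθ.laplacian_CLM_comp_left (l := ofRealCLM)))
  have hnorm : ∑ i, (inner ℝ a (b i) : ℂ) ^ 2 = ‖a‖ ^ 2 := by
    exact_mod_cast (Finset.sum_congr rfl fun i _ => by simp).trans (b.sum_sq_norm_inner_left a)
  rw [laplacian_cexp (contDiffAt_const.mul hθc) b, hΔ,
    (hasFDerivAt_I_mul_ofReal hθ').fderiv]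
  simp [mul_pow, hnorm, sub_eq_add_neg]

/-- The magnetic Schrödinger operator `(i∇ + A)²` in Coulomb gauge: the term `i (div A) u` is
left out, so this is `(i∇ + A)² u` for divergence-free potentials `A`. The derivative of `u` along
`A` stands for `A · ∇u`. -/
noncomputable def magneticLaplacian (A : E → E) (u : E → ℂ) (x : E) : ℂ :=
  -Δ u x + 2 * I * fderiv ℝ u x (A x) + ‖A x‖ ^ 2 * u x

theorem magneticLaplacian_cexp_I_mul {A : E → E} {θ : E → ℝ} {f : E → ℂ}
    (hθ : ContDiffAt ℝ 2 θ x) (hA : HasGradientAt θ (A x) x) (hf : ContDiffAt ℝ 2 f x) :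
    magneticLaplacian A (fun y => exp (I * θ y) * f y) x =
      -(exp (I * θ x) * (Δ f x + I * Δ θ x * f x)) := by
  let b := stdOrthonormalBasis ℝ E
  have hg : ContDiffAt ℝ 2 (fun y => exp (I * θ y)) x :=
    (contDiffAt_const.mul (contDiffAt_ofReal_comp hθ)).cexp
  have hcross : ∑ i, fderiv ℝ (fun y => exp (I * θ y)) x (b i) * fderiv ℝ f x (b i) =
      exp (I * θ x) * I * fderiv ℝ f x (A x) := by
    simp only [fderiv_cexp_I_mul hA, ← sum_inner_smul_map b (fderiv ℝ f x) (A x), Finset.mul_sum,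
      real_smul, mul_assoc]
  have hdir : fderiv ℝ (fun y => exp (I * θ y) * f y) x (A x) =
      exp (I * θ x) * (fderiv ℝ f x (A x) + I * ‖A x‖ ^ 2 * f x) := by
    rw [fderiv_fun_mul (hg.differentiableAt two_ne_zero) (hf.differentiableAt two_ne_zero)]
    simp only [add_apply, smul_apply, smul_eq_mul, fderiv_cexp_I_mul hA,
      real_inner_self_eq_norm_sq, ofReal_pow]
    ring
  rw [magneticLaplacian, laplacian_mul hg hf b, hcross, laplacian_cexp_I_mul hθ hA, hdir]
  linear_combination 2 * exp (I * θ x) * ‖A x‖ ^ 2 * f x * I_sq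

theorem magneticLaplacian_cexp_I_mul_eq_zero {A : E → E} {θ : E → ℝ} {f : E → ℂ}
    (hθ : HarmonicAt θ x) (hA : HasGradientAt θ (A x) x) (hf : HarmonicAt f x) :
    magneticLaplacian A (fun y => exp (I * θ y) * f y) x = 0 := by
  simp [magneticLaplacian_cexp_I_mul hθ.1 hA hf.1, hθ.2.eq_of_nhds, hf.2.eq_of_nhds]

end Gauge

section AharonovBohm

lemma arg_eq_im_log : arg = fun z => (log z).im :=
  funext fun z => (log_im z).symm

lemma harmonicAt_arg {z : ℂ} (hz : z ∈ slitPlane) : HarmonicAt arg z :=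
  arg_eq_im_log ▸ (analyticAt_clog hz).harmonicAt_im

lemma hasGradientAt_arg {z : ℂ} (hz : z ∈ slitPlane) : HasGradientAt arg (I / conj z) z := by
  have hlog := (hasStrictDerivAt_log hz).hasDerivAt.hasFDerivAt.restrictScalars ℝ
  rw [hasGradientAt_iff_hasFDerivAt, arg_eq_im_log]
  refine (imCLM.hasFDerivAt.comp z hlog).congr_fderiv ?_
  ext v
  simp [div_re, div_im]
  ring

/-- The Aharonov–Bohm potential `α (-x₂, x₁) / |x|²` with pole `0` and circulation `α`, as a vector
field on `ℂ`: multiplication by `I` is the rotation `(x₁, x₂) ↦ (-x₂, x₁)` and `z / |z|²` is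
`1 / conj z`. Its value at the pole is `0`. -/
noncomputable def aharonovBohmPotential (α : ℝ) (z : ℂ) : ℂ :=
  α • (I / conj z)

lemma aharonovBohmPotential_re (α : ℝ) (z : ℂ) :
    (aharonovBohmPotential α z).re = α * (-z.im / (z.re ^ 2 + z.im ^ 2)) := by
  simp [aharonovBohmPotential, div_re, normSq_apply, pow_two, neg_div]

lemma aharonovBohmPotential_im (α : ℝ) (z : ℂ) :
    (aharonovBohmPotential α z).im = α * (z.re / (z.re ^ 2 + z.im ^ 2)) := by
  simp [aharonovBohmPotential, div_im, normSq_apply, pow_two]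

lemma contDiffAt_cexp_I_mul_arg_mul (α : ℝ) {f : ℂ → ℝ} {z : ℂ} (hz : z ∈ slitPlane)
    (hf : HarmonicAt f z) : ContDiffAt ℝ ω (fun w => exp (I * (α * arg w : ℝ)) * f w) z := by
  have hθ : ContDiffAt ℝ ω (fun w => α * arg w) z :=
    contDiffAt_const.mul (HarmonicAt.analyticAt (harmonicAt_arg hz)).contDiffAt
  exact (contDiffAt_const.mul (contDiffAt_ofReal_comp hθ)).cexp.mul
    (contDiffAt_ofReal_comp (HarmonicAt.analyticAt hf).contDiffAt)

theorem magneticLaplacian_aharonovBohmPotential_eq_zero (α : ℝ) {f : ℂ → ℝ} {z : ℂ}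
    (hz : z ∈ slitPlane) (hf : HarmonicAt f z) :
    magneticLaplacian (aharonovBohmPotential α) (fun w => exp (I * (α * arg w : ℝ)) * f w) z
      = 0 := by
  have hθ : HasGradientAt (fun w => α * arg w) (aharonovBohmPotential α z) z := by
    rw [hasGradientAt_iff_hasFDerivAt, aharonovBohmPotential, map_smul]
    exact (hasGradientAt_arg hz).hasFDerivAt.const_mul α
  exact magneticLaplacian_cexp_I_mul_eq_zero (harmonicAt_arg hz).const_smul hθ
    (hf.comp_CLM ofRealCLM)

end AharonovBohm

section Coordinates

variable {F : Type*} [NormedAddCommGroup F] [NormedSpace ℝ F]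

lemma fderiv_comp_equivRealProdCLM_symm (g : ℂ → F) (x v : ℝ × ℝ) :
    fderiv ℝ (g ∘ equivRealProdCLM.symm) x v =
      fderiv ℝ g (equivRealProdCLM.symm x) (equivRealProdCLM.symm v) :=
  DFunLike.congr_fun equivRealProdCLM.symm.comp_right_fderiv v

lemma fderiv_fderiv_comp_equivRealProdCLM_symm {g : ℂ → F} {x : ℝ × ℝ}
    (hg : ContDiffAt ℝ 2 g (equivRealProdCLM.symm x)) (v w : ℝ × ℝ) :
    fderiv ℝ (fun y => fderiv ℝ (g ∘ equivRealProdCLM.symm) y w) x v =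
      iteratedFDeriv ℝ 2 g (equivRealProdCLM.symm x)
        ![equivRealProdCLM.symm v, equivRealProdCLM.symm w] := by
  simp only [fderiv_comp_equivRealProdCLM_symm, iteratedFDeriv_two_eq_fderiv_fderiv hg]
  exact fderiv_comp_equivRealProdCLM_symm (fun z => fderiv ℝ g z _) x v

lemma magneticLaplacian_equivRealProdCLM_symm {A u : ℂ → ℂ} {x : ℝ × ℝ}
    (hu : ContDiffAt ℝ 2 u (equivRealProdCLM.symm x)) :
    magneticLaplacian A u (equivRealProdCLM.symm x) =
      -(fderiv ℝ (fun y => fderiv ℝ (u ∘ equivRealProdCLM.symm) y (1, 0)) x (1, 0)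
          + fderiv ℝ (fun y => fderiv ℝ (u ∘ equivRealProdCLM.symm) y (0, 1)) x (0, 1))
        + 2 * I *
          ((A (equivRealProdCLM.symm x)).re * fderiv ℝ (u ∘ equivRealProdCLM.symm) x (1, 0)
            + (A (equivRealProdCLM.symm x)).im * fderiv ℝ (u ∘ equivRealProdCLM.symm) x (0, 1))
        + ((A (equivRealProdCLM.symm x)).re ^ 2 + (A (equivRealProdCLM.symm x)).im ^ 2 : ℝ)
          * u (equivRealProdCLM.symm x) := by
  have hone : equivRealProdCLM.symm (1, 0) = 1 := by simp [equivRealProdCLM_symm_apply]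
  have hI : equivRealProdCLM.symm (0, 1) = I := by simp [equivRealProdCLM_symm_apply]
  have hdir (L : ℂ →L[ℝ] ℂ) (a : ℂ) : L a = a.re * L 1 + a.im * L I := by
    simpa using (sum_inner_smul_map orthonormalBasisOneI L a).symm
  rw [fderiv_fderiv_comp_equivRealProdCLM_symm hu, fderiv_fderiv_comp_equivRealProdCLM_symm hu,
    fderiv_comp_equivRealProdCLM_symm, fderiv_comp_equivRealProdCLM_symm, hone, hI, ← hdir,
    magneticLaplacian, laplacian_eq_iteratedFDeriv_complexPlane, ← ofReal_pow, Complex.sq_norm,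
    normSq_apply, ← pow_two, ← pow_two]

theorem aharonov_bohm_solution_general (α : ℝ) {f : ℝ × ℝ → ℝ} {u : ℝ × ℝ → ℂ} {s : Set (ℝ × ℝ)}
    (hs : ∀ x ∈ s, equivRealProdCLM.symm x ∈ slitPlane)
    (hf : ∀ x ∈ s, HarmonicAt (f ∘ equivRealProdCLM) (equivRealProdCLM.symm x))
    (hu : ∀ x, u x = exp (I * (α * arg (x.1 + I * x.2) : ℝ)) * f x) :
    ContDiffOn ℝ ω u s ∧
      ∀ x ∈ s,
        -(fderiv ℝ (fun y => fderiv ℝ u y (1, 0)) x (1, 0)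
            + fderiv ℝ (fun y => fderiv ℝ u y (0, 1)) x (0, 1))
          + 2 * I *
            ((α * (-x.2 / (x.1 ^ 2 + x.2 ^ 2)) : ℝ) * fderiv ℝ u x (1, 0)
              + (α * (x.1 / (x.1 ^ 2 + x.2 ^ 2)) : ℝ) * fderiv ℝ u x (0, 1))
          + ((α * (-x.2 / (x.1 ^ 2 + x.2 ^ 2))) ^ 2
              + (α * (x.1 / (x.1 ^ 2 + x.2 ^ 2))) ^ 2 : ℝ) * u x = 0 := by
  let U : ℂ → ℂ := fun z => exp (I * (α * arg z : ℝ)) * (f ∘ equivRealProdCLM) z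
  obtain rfl : u = U ∘ equivRealProdCLM.symm := funext fun x => by
    simp [hu, U, equivRealProdCLM_symm_apply, mul_comm I]
  have hU {x} (hx : x ∈ s) : ContDiffAt ℝ ω U (equivRealProdCLM.symm x) :=
    contDiffAt_cexp_I_mul_arg_mul α (hs x hx) (hf x hx)
  refine ⟨fun x hx => ?_, fun x hx => ?_⟩
  · exact ((hU hx).comp x equivRealProdCLM.symm.contDiff.contDiffAt).contDiffWithinAt
  · have heq := magneticLaplacian_aharonovBohmPotential_eq_zero α (hs x hx) (hf x hx)
    rwa [magneticLaplacian_equivRealProdCLM_symm ((hU hx).of_le le_top), aharonovBohmPotential_re,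
      aharonovBohmPotential_im, equivRealProdCLM_symm_apply_re, equivRealProdCLM_symm_apply_im]
      at heq

end Coordinates

lemma psi_equivRealProdCLM (j : ℕ) (z : ℂ) : psi j (equivRealProdCLM z) = -((-I * z) ^ j).im := by
  have hconj : I * (z.re - I * z.im) = conj (-I * z) := by
    apply Complex.ext <;> simp
  rw [psi, ← mul_pow, equivRealProdCLM_apply, hconj, ← map_pow, conj_im]

lemma harmonicAt_psi_comp_equivRealProdCLM (j : ℕ) (z : ℂ) :
    HarmonicAt (psi j ∘ equivRealProdCLM) z := by
  have hpow : AnalyticAt ℂ (fun w : ℂ => (-I * w) ^ j) z := by fun_prop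
  exact (funext (psi_equivRealProdCLM j) : psi j ∘ equivRealProdCLM = _) ▸ hpow.harmonicAt_im.neg

/-- `u = e^{iθ̃₀/2} ψ_j` is smooth on the open half-plane and satisfies the
Aharonov–Bohm equation `(i∇ + A₀)² u = -Δu + 2iA₀·∇u + |A₀|²u = 0` there, where
`A₀(x) = (-x₂, x₁)/(2|x|²)` and `θ̃₀(x) = arg(x₁ + i x₂)`. -/
theorem aharonov_bohm_solution (j : ℕ) (hj : 1 ≤ j) (u : ℝ × ℝ → ℂ)
    (hu : ∀ x : ℝ × ℝ,
      u x = Complex.exp (Complex.I * (Complex.arg ((x.1 : ℂ) + Complex.I * (x.2 : ℂ))) / 2)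
              * ((psi j x : ℝ) : ℂ)) :
    ContDiffOn ℝ (⊤ : ℕ∞) u {x : ℝ × ℝ | 0 < x.1} ∧
    ∀ x ∈ {x : ℝ × ℝ | 0 < x.1},
      -(fderiv ℝ (fun y => fderiv ℝ u y (1, 0)) x (1, 0)
          + fderiv ℝ (fun y => fderiv ℝ u y (0, 1)) x (0, 1))
        + 2 * Complex.I *
            (((-x.2 / (2 * (x.1 ^ 2 + x.2 ^ 2)) : ℝ) : ℂ) * fderiv ℝ u x (1, 0)
              + ((x.1 / (2 * (x.1 ^ 2 + x.2 ^ 2)) : ℝ) : ℂ) * fderiv ℝ u x (0, 1))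
        + (((-x.2 / (2 * (x.1 ^ 2 + x.2 ^ 2))) ^ 2
              + (x.1 / (2 * (x.1 ^ 2 + x.2 ^ 2))) ^ 2 : ℝ) : ℂ) * u x = 0 := by
  obtain ⟨hsmooth, heq⟩ := aharonov_bohm_solution_general (1 / 2) (f := psi j) (u := u)
    (s := {x | 0 < x.1}) (fun x hx => .inl (by simpa using hx))
    (fun _ _ => harmonicAt_psi_comp_equivRealProdCLM j _)
    fun x => by rw [hu]; push_cast; ring_nf
  exact ⟨hsmooth.of_le le_top, by simpa only [div_mul_div_comm, one_mul] using heq⟩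
end
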